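/- For every tree T with at least 2 vertices, φ(T) ≥ (D₂(T) + S(T))/3, where D₂(T) is the number of vertices of degree at least 2 and S(T) is the number of support vertices. -/

import Mathlib

open SimpleGraph Finset

/-!
By König's theorem (`exists_cover_card_le_matching`) the bipartite graph `T` has a vertex cover `C`
and a matching with at least `|C|` edges, so it suffices to bound `D₂(T) + S(T)` by `3|C|` for an
arbitrary vertex cover `C`.

* The complement of `C` is independent, so distinct vertices outside `C` are incident to disjoint
  sets of edges, and the `|V| - 1` edges of `T` number at least `∑ v ∉ C, deg v`. Every degree is
  positive, so this sum is at least `|V \ C|` plus the number of vertices of degree at least 2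
  outside `C`, and hence there are fewer than `|C|` such vertices
  (`card_two_le_degree_not_mem_cover_lt`).
* A support vertex outside `C` has its leaves in `C`, and a leaf has only one neighbour, so there
  are at most as many support vertices outside `C` as leaves in `C`
  (`card_support_not_mem_cover_le`). These leaves and the vertices of degree at least 2 in `C`
  together number at most `|C|`.
* There are at most `|C|` support vertices inside `C`.
-/

/-- The nontrivial half of **König's theorem**: a finite bipartite graph has a matching with at
least as many edges as some vertex cover. A minimum cover `C` is matched into its complement by
Hall's theorem: for a monochromatic `A ⊆ C`, replacing `A` by its neighbours outside `C` gives
another cover, so there are at least `|A|` such neighbours. -/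
lemma exists_cover_card_le_matching {V : Type*} [Fintype V] [DecidableEq V] (G : SimpleGraph V)
    [DecidableRel G.Adj] (hG : G.IsBipartite) :
    ∃ C : Finset V, G.IsVertexCover C ∧ ∃ M : G.Subgraph, M.IsMatching ∧
      #C ≤ M.edgeSet.ncard := by
  classical
  obtain ⟨col⟩ := hG
  obtain ⟨C, hC, hmin⟩ : ∃ C : Finset V, G.IsVertexCover C ∧
      ∀ D : Finset V, G.IsVertexCover D → #C ≤ #D := by
    obtain ⟨C, hC, hmin⟩ := Finset.exists_min_image
      (univ.filter fun C : Finset V => G.IsVertexCover C) Finset.card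
      ⟨univ, by simp⟩
    exact ⟨C, by simpa using hC, fun D hD => hmin D (by simpa using hD)⟩
  refine ⟨C, hC, ?_⟩
  let N : V → Finset V := fun v => G.neighborFinset v \ C
  have hN : ∀ v w, w ∈ N v ↔ G.Adj v w ∧ w ∉ C := by simp [N]
  have hmono : ∀ (i : Fin 2) (A : Finset V), A ⊆ C → (∀ a ∈ A, col a = i) →
      #A ≤ #(A.biUnion N) := by
    intro i A hA hcol
    have hcov : G.IsVertexCover ((C \ A ∪ A.biUnion N : Finset V) : Set V) := by
      intro v w hvw
      have h1 := hC hvw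
      have h2 := col.valid hvw
      simp only [coe_union, coe_sdiff, coe_biUnion, Set.mem_union, Set.mem_sdiff, mem_coe,
        Set.mem_iUnion, hN, exists_prop] at h1 ⊢
      grind [hvw.symm]
    have h1 := hmin _ hcov
    have h2 := card_union_le (C \ A) (A.biUnion N)
    have h3 := card_sdiff_add_card_eq_card hA
    omega
  have hall : ∀ A : Finset V, A ⊆ C → #A ≤ #(A.biUnion N) := by
    intro A hA
    let B : Fin 2 → Finset V := fun i => A.filter fun a => col a = i
    have hB : ∀ i, #(B i) ≤ #((B i).biUnion N) := fun i =>
      hmono i (B i) ((filter_subset _ _).trans hA) (by simp [B])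
    have hcardA : #A = #(B 0) + #(B 1) := by
      rw [← card_union_of_disjoint]
      · congr 1
        ext a
        simp only [B, mem_union, mem_filter]
        have : col a = 0 ∨ col a = 1 := by omega
        tauto
      · rw [Finset.disjoint_left]
        simp +contextual [B]
    -- A neighbour of a vertex of one colour has the other colour.
    have hdisj : Disjoint ((B 0).biUnion N) ((B 1).biUnion N) := by
      rw [Finset.disjoint_left]
      intro w h0 h1
      simp only [mem_biUnion, hN, B, mem_filter] at h0 h1
      obtain ⟨a, ⟨-, ha⟩, haw, -⟩ := h0
      obtain ⟨b, ⟨-, hb⟩, hbw, -⟩ := h1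
      have h2 := col.valid haw
      have h3 := col.valid hbw
      omega
    have hsub : (B 0).biUnion N ∪ (B 1).biUnion N ⊆ A.biUnion N :=
      union_subset (biUnion_subset_biUnion_of_subset_left _ (filter_subset _ _))
        (biUnion_subset_biUnion_of_subset_left _ (filter_subset _ _))
    have h1 := card_le_card hsub
    rw [card_union_of_disjoint hdisj] at h1
    have := hB 0
    have := hB 1
    omega
  obtain ⟨f, hf, hfN⟩ := (Finset.all_card_le_biUnion_card_iff_exists_injective
    (fun x : C => N x)).mp fun s => by
      have h := hall (s.map (Function.Embedding.subtype _)) (by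
        intro x hx
        obtain ⟨y, -, rfl⟩ := mem_map.mp hx
        exact y.2)
      rw [card_map, map_eq_image, image_biUnion] at h
      exact h
  have hadj : ∀ x : C, G.Adj x (f x) := fun x => ((hN _ _).mp (hfN x)).1
  have hout : ∀ x : C, f x ∉ C := fun x => ((hN _ _).mp (hfN x)).2
  refine ⟨⨆ x : C, G.subgraphOfAdj (hadj x), ?_, ?_⟩
  · refine Subgraph.IsMatching.iSup (fun x => Subgraph.IsMatching.subgraphOfAdj _) ?_
    intro x y hxy
    have h1 := hf.ne hxy
    have h2 := hout x
    have h3 := hout y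
    have h4 : (x : V) ≠ y := fun h => hxy (Subtype.ext h)
    simp only [support_subgraphOfAdj]
    rw [Set.disjoint_left]
    have := x.2
    have := y.2
    simp only [Set.mem_insert_iff, Set.mem_singleton_iff]
    grind
  · have hinj : Function.Injective fun x : C => s((x : V), f x) := by
      intro x y hxy
      simp only [Sym2.eq_iff] at hxy
      rcases hxy with ⟨h, -⟩ | ⟨h, -⟩
      · exact Subtype.ext h
      · exact absurd (h ▸ x.2) (hout y)
    calc #C = (Set.range fun x : C => s((x : V), f x)).ncard := by
          rw [← Nat.card_coe_set_eq, Nat.card_range_of_injective hinj]; simp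
      _ ≤ _ := by
          refine Set.ncard_le_ncard ?_ (Set.toFinite _)
          rintro _ ⟨x, rfl⟩
          simp only [Subgraph.edgeSet_iSup, Set.mem_iUnion]
          exact ⟨x, by simp⟩

lemma card_two_le_degree_not_mem_cover_lt {V : Type*} [Fintype V] [DecidableEq V]
    (G : SimpleGraph V) [DecidableRel G.Adj] (hT : G.IsTree) (hn : 2 ≤ Fintype.card V)
    (C : Finset V) (hC : G.IsVertexCover C) :
    #(univ.filter fun v => 2 ≤ G.degree v ∧ v ∉ C) < #C := by
  have : Nontrivial V := Fintype.one_lt_card_iff_nontrivial.mp hn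
  have hE := hT.card_edgeFinset
  have hpos : ∀ v, 1 ≤ G.degree v := fun v => hT.connected.preconnected.degree_pos_of_nontrivial v
  have hdisj : ((Cᶜ : Finset V) : Set V).PairwiseDisjoint fun v => G.incidenceFinset v := by
    intro v hv w hw hvw
    simp only [Function.onFun]
    rw [Finset.disjoint_left]
    intro e he he'
    rw [mem_incidenceFinset] at he he'
    have := hC (G.adj_of_mem_incidenceSet hvw he he')
    simp at hv hw this
    tauto
  have hsum : ∑ v ∈ Cᶜ, G.degree v ≤ #G.edgeFinset := by
    simp only [← card_incidenceFinset_eq_degree]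
    rw [← card_biUnion hdisj]
    exact card_le_card (biUnion_subset.mpr fun v _ => G.incidenceFinset_subset v)
  have hlow : #Cᶜ + #(univ.filter fun v => 2 ≤ G.degree v ∧ v ∉ C) ≤ ∑ v ∈ Cᶜ, G.degree v := by
    have : (univ.filter fun v => 2 ≤ G.degree v ∧ v ∉ C) = Cᶜ.filter fun v => 2 ≤ G.degree v := by
      ext; simp [and_comm]
    rw [this, card_eq_sum_ones, card_filter, ← sum_add_distrib]
    refine sum_le_sum fun v _ => ?_
    have := hpos v
    split_ifs <;> omega
  have := card_add_card_compl C
  omega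

lemma card_support_not_mem_cover_le {V : Type*} [Fintype V] [DecidableEq V]
    (G : SimpleGraph V) [DecidableRel G.Adj] (C : Finset V) (hC : G.IsVertexCover C) :
    #(univ.filter fun v => (∃ u, G.Adj v u ∧ G.degree u = 1) ∧ v ∉ C)
      ≤ #(C.filter fun u => G.degree u = 1) := by
  refine card_le_card_of_forall_subsingleton (fun v u => G.Adj v u) ?_ ?_
  · intro v hv
    obtain ⟨⟨u, hvu, hu⟩, hvC⟩ := (mem_filter.mp hv).2
    refine ⟨u, mem_filter.mpr ⟨?_, hu⟩, hvu⟩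
    exact (hC hvu).resolve_left hvC
  · rintro u hu v ⟨-, hv⟩ w ⟨-, hw⟩
    exact (degree_eq_one_iff_existsUnique_adj.mp (mem_filter.mp hu).2).unique hv.symm hw.symm

/-- For every tree `T` with at least 2 vertices, `φ(T) ≥ (D₂(T) + S(T))/3`. -/
theorem stmt10 {V : Type*} [Fintype V] [DecidableEq V] (G : SimpleGraph V)
    [DecidableRel G.Adj] (hT : G.IsTree) (hn : 2 ≤ Fintype.card V) :
    ∃ M : G.Subgraph, M.IsMatching ∧
      (univ.filter (fun v => 2 ≤ G.degree v)).card
        + (univ.filter (fun v => ∃ u, G.Adj v u ∧ G.degree u = 1)).card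
        ≤ 3 * M.edgeSet.ncard := by
  obtain ⟨C, hC, M, hM, hCM⟩ := exists_cover_card_le_matching G hT.isBipartite
  refine ⟨M, hM, ?_⟩
  have h1 := card_two_le_degree_not_mem_cover_lt G hT hn C hC
  have h2 := card_support_not_mem_cover_le G C hC
  have split : ∀ (p : V → Prop) [DecidablePred p],
      #(univ.filter p) = #(C.filter p) + #(univ.filter fun v => p v ∧ v ∉ C) := by
    intro p _
    rw [← card_filter_add_card_filter_not (s := univ.filter p) (· ∈ C), filter_filter,
      filter_filter]
    congr 2
    ext v
    simp [and_comm]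
  have h3 : #(C.filter fun v => 2 ≤ G.degree v) + #(C.filter fun u => G.degree u = 1) ≤ #C := by
    rw [← card_union_of_disjoint]
    · exact card_le_card (union_subset (filter_subset _ _) (filter_subset _ _))
    · rw [Finset.disjoint_left]
      intro v hv hv'
      simp only [mem_filter] at hv hv'
      omega
  have h4 := card_filter_le C fun v => ∃ u, G.Adj v u ∧ G.degree u = 1
  rw [split fun v => 2 ≤ G.degree v, split fun v => ∃ u, G.Adj v u ∧ G.degree u = 1]
  omega
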